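/- For every k ∈ (0,1), ∫₀^∞ dx/(cos(K√x) + cosh(K'√x)) + ∫₀^∞ dx/(cosh(K√x) + cos(K'√x)) = 2; equivalently, Kuznetsov's moment integral I_0^+ equals 1. -/

import Mathlib

/-!
Write `a = K(k)`, `b = K(k')` and let `℘` be the Weierstrass function of the rectangular lattice
with half-periods `a` and `ib`; put `e₁ = ℘(a)`, `e₂ = ℘(a + ib)`, `e₃ = ℘(ib)`. After the
substitution `x = t²` (`integral_sqrt_subst`) the claim splits into two facts.

* `integral_add_eq`: for all `a, b > 0`,
  `∫ t/(cos at + cosh bt) + ∫ t/(cosh at + cos bt) = e₁ - e₃`. With `u = a + ib` the second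
  denominator is `2 cosh(ut/2) cosh(ūt/2)`, and the first is of the same shape. Expanding
  `1/(cosh αt cosh βt)` into exponentials and integrating termwise (`hasSum_laplace`) gives
  quarter-plane sums of `±1/(Mα + Nβ)²` over odd `M, N`. Consecutive odd indices are paired, which
  makes all the double series absolutely convergent. The two integrals fill the four quadrants, and
  the resulting sum over `ℤ × ℤ` is a combination of values of the `℘`-function of the index-two
  sublattice with periods `2u, 2ū`. Since the full lattice consists of two cosets of that
  sublattice (`rect_eq_diag`), this combination is `℘(a) - ℘(ib)` (`hasSum_diag`).

* `rectE_sub_eq_one`: if `a = K(k)` and `b = K(k')` then `e₁ - e₃ = 1`. On `(0, a]` the function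
  `℘` decreases from `∞` to `e₁` and satisfies `℘'² = 4(℘ - e₁)(℘ - e₂)(℘ - e₃)`, so substituting
  `sin² θ = (e₁ - e₃)/(℘(x) - e₃)` yields `K(l) = √(e₁ - e₃) a` for `l² = (e₂ - e₃)/(e₁ - e₃)`
  (`ellipticK_rect`). Rotating the lattice by a quarter turn gives `K(l') = √(e₁ - e₃) b`. Hence
  `K(l) = s K(k)` and `K(l') = s K(k')` with `s = √(e₁ - e₃)`; as `K` is strictly increasing,
  `k = l` and `s = 1` (`modulus_unique`).

The factorization of the cubic requires `e₁, e₂, e₃` to be distinct. This comes from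
`PeriodPair.sub_mem_of_weierstrassP_eq_half`, an application of Liouville's theorem.
-/

open MeasureTheory Real

/-- The complete elliptic integral of the first kind `K(k)`. -/
noncomputable def ellipticK (k : ℝ) : ℝ :=
  ∫ θ in (0 : ℝ)..(π / 2), (1 - k ^ 2 * Real.sin θ ^ 2) ^ (-(1 / 2) : ℝ)

/-- Kuznetsov's moment integral `I_n^+`, realizing
`(1/2)∫_ℝ x^n dx/(cos(√x K) + cosh(√x K'))` with `√x = i√(−x)` for `x < 0`. -/
noncomputable def Iplus (k : ℝ) (n : ℕ) : ℝ :=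
  (1 / 2) * (∫ x in Set.Ioi (0 : ℝ), x ^ n /
      (Real.cos (ellipticK k * Real.sqrt x) +
        Real.cosh (ellipticK (Real.sqrt (1 - k ^ 2)) * Real.sqrt x)))
  + ((-1 : ℝ) ^ n / 2) * (∫ x in Set.Ioi (0 : ℝ), x ^ n /
      (Real.cosh (ellipticK k * Real.sqrt x) +
        Real.cos (ellipticK (Real.sqrt (1 - k ^ 2)) * Real.sqrt x)))

/-- Kuznetsov's moment integral `I_n^−`, realizing
`∫_ℝ x^{n+1} dx/(cos(√x K) − cosh(√x K'))` with `√x = i√(−x)` for `x < 0`. -/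
noncomputable def Iminus (k : ℝ) (n : ℕ) : ℝ :=
  (∫ x in Set.Ioi (0 : ℝ), x ^ (n + 1) /
      (Real.cos (ellipticK k * Real.sqrt x) -
        Real.cosh (ellipticK (Real.sqrt (1 - k ^ 2)) * Real.sqrt x)))
  + (-1 : ℝ) ^ (n + 1) * (∫ x in Set.Ioi (0 : ℝ), x ^ (n + 1) /
      (Real.cosh (ellipticK k * Real.sqrt x) -
        Real.cos (ellipticK (Real.sqrt (1 - k ^ 2)) * Real.sqrt x)))

/-! ### Half-period values of `℘` -/

namespace PeriodPair

variable (L : PeriodPair)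

lemma derivWeierstrassP_half {ω : ℂ} (h2 : 2 * ω ∈ L.lattice) : L.derivWeierstrassP ω = 0 := by
  have h := L.derivWeierstrassP_add_coe (-ω) ⟨_, h2⟩
  rw [show -ω + 2 * ω = ω by ring, derivWeierstrassP_neg] at h
  exact CharZero.eq_neg_self_iff.mp h

lemma weierstrassP_add_mem (z : ℂ) {l : ℂ} (hl : l ∈ L.lattice) :
    L.weierstrassP (z + l) = L.weierstrassP z := L.weierstrassP_add_coe z ⟨l, hl⟩

lemma countable_lattice : (L.lattice : Set ℂ).Countable := by
  have : Countable L.lattice := L.latticeEquivProd.toEquiv.countable_iff.mpr inferInstance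
  exact this

lemma tendsto_sq_mul_weierstrassP :
    Filter.Tendsto (fun z => z ^ 2 * L.weierstrassP z) (nhdsWithin 0 {0}ᶜ) (nhds 1) := by
  have h0 : (0 : ℂ) ∈ L.lattice := zero_mem _
  have hA : ContinuousAt (fun z : ℂ => z ^ 2 * L.weierstrassPExcept 0 z + 1) 0 := by
    have := (L.analyticAt_weierstrassPExcept 0).continuousAt
    fun_prop
  have h1 := hA.tendsto
  simp only [ne_eq, OfNat.ofNat_ne_zero, not_false_eq_true, zero_pow, zero_mul, zero_add] at h1
  refine (h1.mono_left nhdsWithin_le_nhds).congr' ?_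
  filter_upwards [self_mem_nhdsWithin] with z hz
  have := L.ite_eq_one_sub_sq_mul_weierstrassP 0 h0 z
  simp only [show z ≠ 0 from hz, if_false, sub_zero] at this
  rw [this]; simp

/-- `℘` is not locally constant: otherwise, by the identity theorem, it would be constant on the
connected complement of the lattice, contradicting the double pole at `0`. -/
lemma not_eventually_const {ω e : ℂ} (hω : ω ∉ L.lattice) :
    ¬ (∀ᶠ z in nhds ω, L.weierstrassP z = e) := by
  intro h
  have hconn : IsPreconnected ((L.lattice : Set ℂ)ᶜ) :=
    (L.countable_lattice.isConnected_compl_of_one_lt_rank (by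
      rw [Complex.rank_real_complex]; norm_num)).isPreconnected
  have heq := L.analyticOnNhd_weierstrassP.eqOn_of_preconnected_of_eventuallyEq
    (g := fun _ => e) analyticOnNhd_const hconn hω h
  have h1 := L.tendsto_sq_mul_weierstrassP
  have h2 : Filter.Tendsto (fun z : ℂ => z ^ 2 * L.weierstrassP z) (nhdsWithin 0 {0}ᶜ)
      (nhds 0) := by
    have hc : Filter.Tendsto (fun z : ℂ => z ^ 2 * e) (nhdsWithin 0 {0}ᶜ) (nhds 0) := by
      have : ContinuousAt (fun z : ℂ => z ^ 2 * e) 0 := by fun_prop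
      have := this.tendsto
      simp only [ne_eq, OfNat.ofNat_ne_zero, not_false_eq_true, zero_pow, zero_mul] at this
      exact this.mono_left nhdsWithin_le_nhds
    refine hc.congr' ?_
    filter_upwards [self_mem_nhdsWithin, mem_nhdsWithin_of_mem_nhds
      (L.compl_lattice_sdiff_singleton_mem_nhds 0)] with z hz hz'
    have hzL : z ∉ L.lattice := fun hm => hz' ⟨hm, hz⟩
    rw [heq hzL]
  exact one_ne_zero (tendsto_nhds_unique h1 h2)

open Classical in
/-- The value of `℘` at a half-period `ω` is taken only at the points `ω + Λ`: the elliptic function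
`(℘(z) - ℘(ω)) (℘(z + ω) - ℘(ω))` has no poles, so it is constant by Liouville's theorem,
and that constant is not `0`. -/
lemma sub_mem_of_weierstrassP_eq_half {ω z : ℂ} (hω : ω ∉ L.lattice) (h2 : 2 * ω ∈ L.lattice)
    (hz : z ∉ L.lattice) (hzω : L.weierstrassP z = L.weierstrassP ω) : z - ω ∈ L.lattice := by
  set e := L.weierstrassP ω with he
  -- factor `℘(ω + s) - e = s² g(s)`
  have hωan : AnalyticAt ℂ L.weierstrassP ω := L.analyticOnNhd_weierstrassP ω hω
  have hf : AnalyticAt ℂ (fun w => L.weierstrassP w - e) ω := hωan.sub analyticAt_const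
  obtain ⟨g, hg, hgeq⟩ : ∃ g : ℂ → ℂ, AnalyticAt ℂ g ω ∧
      ∀ᶠ w in nhds ω, L.weierstrassP w - e = (w - ω) ^ 2 * g w := by
    have h := (natCast_le_analyticOrderAt (n := 2) hf).mp
      ((natCast_le_analyticOrderAt_iff_iteratedDeriv_eq_zero hf).mpr (fun i hi => by
        interval_cases i
        · simp [he]
        · rw [iteratedDeriv_one, deriv_sub_const, L.deriv_weierstrassP]
          exact L.derivWeierstrassP_half h2))
    simpa using h
  -- `(℘(w) - e) (℘(w + ω) - e)`, with its removable singularities at `Λ` and `Λ - ω` filled in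
  set F : ℂ → ℂ := fun w => if w ∈ L.lattice ∨ w + ω ∈ L.lattice then g ω
    else (L.weierstrassP w - e) * (L.weierstrassP (w + ω) - e) with hF
  have hper : ∀ w, ∀ l ∈ L.lattice, F (w + l) = F w := by
    intro w l hl
    have e1 : w + l ∈ L.lattice ↔ w ∈ L.lattice := L.lattice.add_mem_iff_left hl
    have e2 : w + l + ω ∈ L.lattice ↔ w + ω ∈ L.lattice := by
      rw [show w + l + ω = (w + ω) + l by ring]; exact L.lattice.add_mem_iff_left hl
    simp only [hF, e1, e2]
    rw [show w + l + ω = (w + ω) + l by ring, L.weierstrassP_add_mem _ hl,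
      L.weierstrassP_add_mem _ hl]
  have hshift : ∀ w, F (w + ω) = F w := by
    intro w
    have e2 : w + ω + ω ∈ L.lattice ↔ w ∈ L.lattice := by
      rw [show w + ω + ω = w + 2 * ω by ring]; exact L.lattice.add_mem_iff_left h2
    simp only [hF, e2]
    rw [show w + ω + ω = w + 2 * ω by ring, L.weierstrassP_add_mem _ h2, mul_comm]
    simp only [or_comm]
  have h0 : (0 : ℂ) ∈ L.lattice := zero_mem _
  have hFnear : F =ᶠ[nhds 0] fun w => (w ^ 2 * L.weierstrassPExcept 0 w + 1 - w ^ 2 * e)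
      * g (w + ω) := by
    have hc : Filter.Tendsto (fun w : ℂ => w + ω) (nhds 0) (nhds ω) := by
      have : ContinuousAt (fun w : ℂ => w + ω) 0 := by fun_prop
      simpa [ContinuousAt] using this
    filter_upwards [L.compl_lattice_sdiff_singleton_mem_nhds 0, hc.eventually hgeq,
      hc.eventually (L.isClosed_lattice.isOpen_compl.mem_nhds hω)] with w hw hw2 hw3
    by_cases hw0 : w = 0
    · subst hw0
      simp [hF, h0]
    · have hwL : w ∉ L.lattice := fun hm => hw ⟨hm, hw0⟩
      have hwL' : w + ω ∉ L.lattice := hw3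
      have := L.ite_eq_one_sub_sq_mul_weierstrassP 0 h0 w
      simp only [hw0, if_false, sub_zero, ne_eq, OfNat.ofNat_ne_zero, not_false_eq_true, zero_pow,
        div_zero] at this
      simp only [hF, hwL, hwL', or_self, if_false]
      rw [hw2, ← this]; ring
  have hF0 : AnalyticAt ℂ F 0 := by
    refine AnalyticAt.congr ?_ hFnear.symm
    have h1 := L.analyticAt_weierstrassPExcept 0
    have h3 : AnalyticAt ℂ (fun w => g (w + ω)) 0 := by
      have : AnalyticAt ℂ g ((fun w : ℂ => w + ω) 0) := by simpa using hg
      exact this.comp (f := fun w : ℂ => w + ω) (by fun_prop)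
    have h4 : AnalyticAt ℂ (fun w => w ^ 2 * L.weierstrassPExcept 0 w + 1 - w ^ 2 * e) 0 := by
      fun_prop
    exact h4.mul h3
  have hFan : ∀ w, AnalyticAt ℂ F w := by
    have hL : ∀ l ∈ L.lattice, AnalyticAt ℂ F l := by
      intro l hl
      have : AnalyticAt ℂ F ((fun w : ℂ => w + -l) l) := by simpa using hF0
      have h := this.comp (f := fun w : ℂ => w + -l) (by fun_prop)
      refine h.congr (Filter.Eventually.of_forall fun w => ?_)
      exact hper w (-l) (neg_mem hl)
    intro w
    by_cases h1 : w ∈ L.lattice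
    · exact hL w h1
    by_cases h3 : w + ω ∈ L.lattice
    · have : AnalyticAt ℂ F ((fun w : ℂ => w + ω) w) := hL _ h3
      have h := this.comp (f := fun w : ℂ => w + ω) (by fun_prop)
      exact h.congr (Filter.Eventually.of_forall fun w => hshift w)
    · have ha : AnalyticAt ℂ L.weierstrassP w := L.analyticOnNhd_weierstrassP w h1
      have hb : AnalyticAt ℂ L.weierstrassP ((fun w : ℂ => w + ω) w) :=
        L.analyticOnNhd_weierstrassP (w + ω) h3
      have hb' := hb.comp (f := fun w : ℂ => w + ω) (by fun_prop)
      have hprod := (ha.sub (analyticAt_const (v := e))).mul (hb'.sub (analyticAt_const (v := e)))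
      refine hprod.congr ?_
      have hc : ContinuousAt (fun w : ℂ => w + ω) w := by fun_prop
      filter_upwards [L.isClosed_lattice.isOpen_compl.mem_nhds h1,
        hc.eventually (L.isClosed_lattice.isOpen_compl.mem_nhds h3)] with x hx hx'
      have hx1 : x ∉ L.lattice := hx
      have hx2 : x + ω ∉ L.lattice := hx'
      simp [hF, hx1, hx2]
  have hFd : Differentiable ℂ F := fun w => (hFan w).differentiableAt
  have hconst : ∀ w, F w = F 0 := fun w =>
    hFd.apply_eq_apply_of_bounded (IsZLattice.isCompact_range_of_periodic L.lattice _
      hFd.continuous fun z w hw => hper z w hw).isBounded w 0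
  have hF0v : F 0 = g ω := by simp [hF, h0]
  have hgne : g ω ≠ 0 := by
    intro hg0
    -- then `g` vanishes near `ω`, so `℘` is constant there
    have hfac : ∀ᶠ w in nhds (0 : ℂ), w ^ 2 * L.weierstrassPExcept 0 w + 1 - w ^ 2 * e ≠ 0 := by
      have h1 := (L.analyticAt_weierstrassPExcept 0).continuousAt
      have : ContinuousAt (fun w : ℂ => w ^ 2 * L.weierstrassPExcept 0 w + 1 - w ^ 2 * e) 0 := by
        fun_prop
      exact this.eventually_ne (by simp)
    have hgz : ∀ᶠ w in nhds (0 : ℂ), g (w + ω) = 0 := by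
      filter_upwards [hfac, hFnear] with w h1 h3
      rw [hconst w, hF0v, hg0] at h3
      exact (mul_eq_zero.mp h3.symm).resolve_left h1
    have hgz' : ∀ᶠ w in nhds ω, g w = 0 := by
      have hc : Filter.Tendsto (fun w : ℂ => w - ω) (nhds ω) (nhds 0) := by
        have : ContinuousAt (fun w : ℂ => w - ω) ω := by fun_prop
        simpa [ContinuousAt] using this
      filter_upwards [hc.eventually hgz] with w hw
      simpa using hw
    refine L.not_eventually_const hω (e := e) ?_
    filter_upwards [hgz', hgeq] with w h1 h3
    rw [h1, mul_zero, sub_eq_zero] at h3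
    exact h3
  by_contra hne
  have hzω' : z + ω ∉ L.lattice := by
    intro hm
    apply hne
    have := sub_mem hm h2
    rwa [show z + ω - 2 * ω = z - ω by ring] at this
  apply hgne
  rw [← hF0v, ← hconst z]
  simp [hF, hz, hzω', hzω]

/-- Three pairwise inequivalent half-periods give the factorization of the cubic in the
differential equation of `℘`. -/
lemma derivWeierstrassP_sq_factor {ω₁ ω₂ ω₃ : ℂ} (h₁ : ω₁ ∉ L.lattice) (h₂ : ω₂ ∉ L.lattice)
    (h₃ : ω₃ ∉ L.lattice) (d₁ : 2 * ω₁ ∈ L.lattice) (d₂ : 2 * ω₂ ∈ L.lattice)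
    (d₃ : 2 * ω₃ ∈ L.lattice) (h₁₂ : ω₁ - ω₂ ∉ L.lattice) (h₁₃ : ω₁ - ω₃ ∉ L.lattice)
    (h₂₃ : ω₂ - ω₃ ∉ L.lattice) {z : ℂ} (hz : z ∉ L.lattice) :
    L.derivWeierstrassP z ^ 2 = 4 * (L.weierstrassP z - L.weierstrassP ω₁) *
      (L.weierstrassP z - L.weierstrassP ω₂) * (L.weierstrassP z - L.weierstrassP ω₃) := by
  have q₁ := L.derivWeierstrassP_sq ω₁ h₁
  have q₂ := L.derivWeierstrassP_sq ω₂ h₂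
  have q₃ := L.derivWeierstrassP_sq ω₃ h₃
  rw [L.derivWeierstrassP_half d₁] at q₁
  rw [L.derivWeierstrassP_half d₂] at q₂
  rw [L.derivWeierstrassP_half d₃] at q₃
  have n₁₂ : L.weierstrassP ω₁ - L.weierstrassP ω₂ ≠ 0 := fun h =>
    h₁₂ (L.sub_mem_of_weierstrassP_eq_half h₂ d₂ h₁ (sub_eq_zero.mp h))
  have n₁₃ : L.weierstrassP ω₁ - L.weierstrassP ω₃ ≠ 0 := fun h =>
    h₁₃ (L.sub_mem_of_weierstrassP_eq_half h₃ d₃ h₁ (sub_eq_zero.mp h))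
  have n₂₃ : L.weierstrassP ω₂ - L.weierstrassP ω₃ ≠ 0 := fun h =>
    h₂₃ (L.sub_mem_of_weierstrassP_eq_half h₃ d₃ h₂ (sub_eq_zero.mp h))
  rw [L.derivWeierstrassP_sq z hz]
  generalize L.weierstrassP ω₁ = e₁ at *
  generalize L.weierstrassP ω₂ = e₂ at *
  generalize L.weierstrassP ω₃ = e₃ at *
  have a₁₂ : 4 * (e₁ ^ 2 + e₁ * e₂ + e₂ ^ 2) - L.g₂ = 0 :=
    mul_left_cancel₀ n₁₂ (by linear_combination q₂ - q₁)
  have a₁₃ : 4 * (e₁ ^ 2 + e₁ * e₃ + e₃ ^ 2) - L.g₂ = 0 :=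
    mul_left_cancel₀ n₁₃ (by linear_combination q₃ - q₁)
  have s : e₁ + e₂ + e₃ = 0 :=
    mul_left_cancel₀ n₂₃ (by linear_combination (a₁₂ - a₁₃) / 4)
  have hg2 : L.g₂ = 4 * (e₁ ^ 2 + e₁ * e₂ + e₂ ^ 2) := by linear_combination -a₁₂
  have hg3 : L.g₃ = 4 * e₁ ^ 3 - L.g₂ * e₁ := by linear_combination q₁
  have he3 : e₃ = -e₁ - e₂ := by linear_combination s
  rw [hg3, hg2, he3]; ring

end PeriodPair

/-! ### Rectangular lattices -/

namespace PeriodPair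

lemma hasSum_weierstrassP_prod (L : PeriodPair) (z : ℂ) :
    HasSum (fun p : ℤ × ℤ => 1 / (z - (p.1 * L.ω₁ + p.2 * L.ω₂)) ^ 2
      - 1 / (p.1 * L.ω₁ + p.2 * L.ω₂) ^ 2) (L.weierstrassP z) := by
  have h := (L.latticeEquivProd.symm.toEquiv.hasSum_iff).mpr (L.hasSum_weierstrassP z)
  refine h.congr_fun ?_
  intro p
  simp [L.latticeEquiv_symm_apply]

end PeriodPair

/-- The rectangular lattice with half-periods `a` and `ib`. -/
noncomputable def rectPair (a b : ℝ) (ha : 0 < a) (hb : 0 < b) : PeriodPair where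
  ω₁ := 2 * a
  ω₂ := 2 * b * Complex.I
  indep := by
    rw [LinearIndependent.pair_iff]
    intro s t h
    have hre := congrArg Complex.re h
    have him := congrArg Complex.im h
    simp at hre him
    constructor
    · rcases hre with h | h
      · exact h
      · exact absurd h ha.ne'
    · rcases him with h | h
      · exact h
      · exact absurd h hb.ne'

section Rect

variable {a b : ℝ} (ha : 0 < a) (hb : 0 < b)

lemma mem_rectPair {z : ℂ} : z ∈ (rectPair a b ha hb).lattice ↔
    ∃ m n : ℤ, z.re = 2 * m * a ∧ z.im = 2 * n * b := by
  rw [PeriodPair.mem_lattice]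
  refine exists_congr fun m => exists_congr fun n => ?_
  simp only [rectPair]
  constructor
  · rintro rfl
    constructor
    · simp; ring
    · simp; ring
  · rintro ⟨h1, h2⟩
    apply Complex.ext
    · simp [h1]; ring
    · simp [h2]; ring

/-- The lattice is stable under complex conjugation. -/
lemma rect_conj (z : ℂ) : (rectPair a b ha hb).weierstrassP (starRingEnd ℂ z) =
    starRingEnd ℂ ((rectPair a b ha hb).weierstrassP z) := by
  have h1 := (rectPair a b ha hb).hasSum_weierstrassP_prod (starRingEnd ℂ z)
  have h2 := Complex.hasSum_conj'.mpr ((rectPair a b ha hb).hasSum_weierstrassP_prod z)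
  have h3 := ((Equiv.prodCongr (Equiv.refl ℤ) (Equiv.neg ℤ)).hasSum_iff).mpr h2
  refine h1.unique (h3.congr_fun fun p => ?_)
  have hconj : starRingEnd ℂ 2 = 2 := map_ofNat _ 2
  simp [rectPair, hconj]

/-- Multiplication by `i` maps the lattice with half-periods `b, ia` onto the one with half-periods
`a, ib`, and `℘` is homogeneous of degree `-2`. -/
lemma rect_swap (z : ℂ) : (rectPair b a hb ha).weierstrassP z =
    -(rectPair a b ha hb).weierstrassP (Complex.I * z) := by
  have h1 := (rectPair b a hb ha).hasSum_weierstrassP_prod z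
  have h2 := ((rectPair a b ha hb).hasSum_weierstrassP_prod (Complex.I * z)).neg
  have h3 := (((Equiv.prodComm ℤ ℤ).trans
    (Equiv.prodCongr (Equiv.neg ℤ) (Equiv.refl ℤ))).hasSum_iff).mpr h2
  refine h1.unique (h3.congr_fun fun p => ?_)
  have key : ∀ w : ℂ, 1 / (Complex.I * w) ^ 2 = -(1 / w ^ 2) := by
    intro w; rw [mul_pow, Complex.I_sq, neg_one_mul, div_neg]
  have e1 : Complex.I * z - (((-p.2 : ℤ) : ℂ) * (2 * a) + (p.1 : ℂ) * (2 * b * Complex.I))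
      = Complex.I * (z - ((p.1 : ℂ) * (2 * b) + (p.2 : ℂ) * (2 * a * Complex.I))) := by
    push_cast; linear_combination (2 * p.2 * a : ℂ) * Complex.I_sq
  have e2 : (((-p.2 : ℤ) : ℂ) * (2 * a) + (p.1 : ℂ) * (2 * b * Complex.I))
      = Complex.I * ((p.1 : ℂ) * (2 * b) + (p.2 : ℂ) * (2 * a * Complex.I)) := by
    push_cast; linear_combination (- 2 * p.2 * a : ℂ) * Complex.I_sq
  simp only [Function.comp_apply, Equiv.trans_apply, Equiv.prodComm_apply, Equiv.prodCongr_apply,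
    Prod.map, Prod.swap, Equiv.neg_apply, Equiv.refl_apply, rectPair]
  rw [e1, e2, key, key]; ring

lemma ofReal_re_of_conj {z : ℂ} (h : starRingEnd ℂ z = z) : z = (z.re : ℂ) :=
  (Complex.conj_eq_iff_re.mp h).symm

lemma rect_real (x : ℝ) : (rectPair a b ha hb).weierstrassP x =
    (((rectPair a b ha hb).weierstrassP x).re : ℂ) := by
  apply ofReal_re_of_conj
  rw [← rect_conj, Complex.conj_ofReal]

lemma ne_two_mul_int_mul {m : ℤ} {c : ℝ} (hc : 0 < c) : c ≠ 2 * m * c := by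
  intro h
  have h1 : (2 * m - 1 : ℝ) * c = 0 := by linarith
  rcases mul_eq_zero.mp h1 with h2 | h2
  · have : (2 * m - 1 : ℤ) = 0 := by exact_mod_cast h2
    omega
  · exact hc.ne' h2

lemma not_mem_rect_of_re {z : ℂ} (h : z.re = a) : z ∉ (rectPair a b ha hb).lattice := by
  rw [mem_rectPair]; rintro ⟨m, n, h1, -⟩
  rw [h] at h1; exact ne_two_mul_int_mul ha h1

lemma not_mem_rect_of_im {z : ℂ} (h : z.im = b) : z ∉ (rectPair a b ha hb).lattice := by
  rw [mem_rectPair]; rintro ⟨m, n, -, h1⟩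
  rw [h] at h1; exact ne_two_mul_int_mul hb h1

lemma not_mem_rect_of_Ioc {x : ℝ} (hx : x ∈ Set.Ioc 0 a) :
    (x : ℂ) ∉ (rectPair a b ha hb).lattice := by
  rw [mem_rectPair]; rintro ⟨m, n, h1, -⟩
  simp only [Complex.ofReal_re] at h1
  have hm : 0 < m := by
    by_contra hm
    have : (m : ℝ) ≤ 0 := by exact_mod_cast not_lt.mp hm
    nlinarith [hx.1]
  have : (1 : ℝ) ≤ m := by exact_mod_cast hm
  nlinarith [hx.2]

/-- `e₁ = ℘(a)` for the rectangular lattice with half-periods `a`, `ib`. -/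
noncomputable def rectE1 : ℝ := ((rectPair a b ha hb).weierstrassP a).re

/-- `e₂ = ℘(a + ib)` for the rectangular lattice with half-periods `a`, `ib`. -/
noncomputable def rectE2 : ℝ := ((rectPair a b ha hb).weierstrassP (a + b * Complex.I)).re

/-- `e₃ = ℘(ib)` for the rectangular lattice with half-periods `a`, `ib`. -/
noncomputable def rectE3 : ℝ := ((rectPair a b ha hb).weierstrassP (b * Complex.I)).re

lemma rectE1_eq : (rectPair a b ha hb).weierstrassP a = (rectE1 ha hb : ℂ) := rect_real ha hb a

lemma two_mul_half2 : 2 * (a + b * Complex.I) ∈ (rectPair a b ha hb).lattice := by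
  rw [mem_rectPair]; exact ⟨1, 1, by simp, by simp⟩

lemma two_mul_half1 : 2 * (a : ℂ) ∈ (rectPair a b ha hb).lattice := by
  rw [mem_rectPair]; exact ⟨1, 0, by simp, by simp⟩

lemma two_mul_half3 : 2 * (b * Complex.I) ∈ (rectPair a b ha hb).lattice := by
  rw [mem_rectPair]; exact ⟨0, 1, by simp, by simp⟩

lemma rectE2_eq :
    (rectPair a b ha hb).weierstrassP (a + b * Complex.I) = (rectE2 ha hb : ℂ) := by
  apply ofReal_re_of_conj
  rw [← rect_conj, ← PeriodPair.weierstrassP_add_mem _ (starRingEnd ℂ _) (two_mul_half3 ha hb)]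
  congr 1
  simp; ring

lemma rectE3_eq :
    (rectPair a b ha hb).weierstrassP (b * Complex.I) = (rectE3 ha hb : ℂ) := by
  apply ofReal_re_of_conj
  rw [← rect_conj, ← PeriodPair.weierstrassP_neg]
  congr 1
  simp

lemma rectE_swap : rectE1 hb ha = -rectE3 ha hb ∧ rectE2 hb ha = -rectE2 ha hb ∧
    rectE3 hb ha = -rectE1 ha hb := by
  refine ⟨?_, ?_, ?_⟩
  · unfold rectE1 rectE3
    rw [rect_swap ha hb, mul_comm]; simp
  · unfold rectE2
    rw [rect_swap ha hb, ← PeriodPair.weierstrassP_add_mem _ _ (two_mul_half1 ha hb),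
      show Complex.I * (b + a * Complex.I) + 2 * a = a + b * Complex.I by
        linear_combination (a : ℂ) * Complex.I_sq]
    simp
  · unfold rectE1 rectE3
    rw [rect_swap ha hb, show Complex.I * (a * Complex.I) = -a by
        linear_combination (a : ℂ) * Complex.I_sq, PeriodPair.weierstrassP_neg]
    simp

/-- The restriction of `℘` to the real axis. -/
noncomputable def rectR (x : ℝ) : ℝ := ((rectPair a b ha hb).weierstrassP x).re

lemma rectR_eq (x : ℝ) : (rectPair a b ha hb).weierstrassP x = (rectR ha hb x : ℂ) :=
  rect_real ha hb x

lemma rectR_hasDerivAt {x : ℝ} (hx : x ∈ Set.Ioc 0 a) :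
    HasDerivAt (rectR ha hb) ((rectPair a b ha hb).derivWeierstrassP x).re x := by
  have h1 : DifferentiableAt ℂ (rectPair a b ha hb).weierstrassP x :=
    ((rectPair a b ha hb).analyticOnNhd_weierstrassP x
      (not_mem_rect_of_Ioc ha hb hx)).differentiableAt
  have h2 := h1.hasDerivAt
  rw [PeriodPair.deriv_weierstrassP] at h2
  exact h2.real_of_complex

lemma rectR_deriv_real {x : ℝ} (hx : x ∈ Set.Ioc 0 a) :
    (rectPair a b ha hb).derivWeierstrassP x =
      (((rectPair a b ha hb).derivWeierstrassP x).re : ℂ) := by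
  have h1 : DifferentiableAt ℂ (rectPair a b ha hb).weierstrassP x :=
    ((rectPair a b ha hb).analyticOnNhd_weierstrassP x
      (not_mem_rect_of_Ioc ha hb hx)).differentiableAt
  have h2 := h1.hasDerivAt
  rw [PeriodPair.deriv_weierstrassP] at h2
  have h3 := h2.comp_ofReal
  have h4 := (rectR_hasDerivAt ha hb hx).ofReal_comp
  refine h3.unique (h4.congr_of_eventuallyEq (Filter.Eventually.of_forall fun y => ?_))
  exact rectR_eq ha hb y

lemma rectR_deriv_sq {x : ℝ} (hx : x ∈ Set.Ioc 0 a) :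
    ((rectPair a b ha hb).derivWeierstrassP x).re ^ 2 = 4 * (rectR ha hb x - rectE1 ha hb) *
      (rectR ha hb x - rectE2 ha hb) * (rectR ha hb x - rectE3 ha hb) := by
  have h := (rectPair a b ha hb).derivWeierstrassP_sq_factor
    (not_mem_rect_of_re ha hb (z := a) (by simp))
    (not_mem_rect_of_re ha hb (z := a + b * Complex.I) (by simp))
    (not_mem_rect_of_im ha hb (z := b * Complex.I) (by simp))
    (two_mul_half1 ha hb) (two_mul_half2 ha hb) (two_mul_half3 ha hb)
    (fun h => not_mem_rect_of_im ha hb (z := b * Complex.I) (by simp)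
      (by simpa using neg_mem h))
    (fun h => not_mem_rect_of_re ha hb (z := a - b * Complex.I) (by simp) h)
    (fun h => not_mem_rect_of_re ha hb (z := a) (by simp) (by simpa using h))
    (not_mem_rect_of_Ioc ha hb hx)
  rw [rectR_deriv_real ha hb hx, rectE1_eq, rectE2_eq, rectE3_eq, rectR_eq] at h
  exact_mod_cast h

lemma rectR_ne {x : ℝ} (hx : x ∈ Set.Ioo 0 a) : rectR ha hb x ≠ rectE1 ha hb := by
  intro h
  have h1 := (rectPair a b ha hb).sub_mem_of_weierstrassP_eq_half
    (not_mem_rect_of_re ha hb (z := a) (by simp)) (two_mul_half1 ha hb)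
    (not_mem_rect_of_Ioc ha hb ⟨hx.1, hx.2.le⟩) (by rw [rectE1_eq, rectR_eq, h])
  have h2 := neg_mem h1
  rw [show -((x : ℂ) - a) = ((a - x : ℝ) : ℂ) by push_cast; ring] at h2
  exact not_mem_rect_of_Ioc ha hb ⟨by linarith [hx.2], by linarith [hx.1]⟩ h2

lemma rectR_ne_of_im {x : ℝ} (hx : x ∈ Set.Ioc 0 a) {ω : ℂ} (hω : ω.im = b)
    (h2 : 2 * ω ∈ (rectPair a b ha hb).lattice) :
    (rectR ha hb x : ℂ) ≠ (rectPair a b ha hb).weierstrassP ω := by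
  intro h
  have h1 := (rectPair a b ha hb).sub_mem_of_weierstrassP_eq_half
    (not_mem_rect_of_im ha hb hω) h2
    (not_mem_rect_of_Ioc ha hb hx) (by rw [rectR_eq, h])
  have h2 := neg_mem h1
  exact not_mem_rect_of_im ha hb (by simp [hω]) h2

lemma rectR_ne2 {x : ℝ} (hx : x ∈ Set.Ioc 0 a) : rectR ha hb x ≠ rectE2 ha hb := by
  have := rectR_ne_of_im ha hb hx (ω := a + b * Complex.I) (by simp) (two_mul_half2 ha hb)
  rw [rectE2_eq] at this
  exact_mod_cast this

lemma rectR_ne3 {x : ℝ} (hx : x ∈ Set.Ioc 0 a) : rectR ha hb x ≠ rectE3 ha hb := by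
  have := rectR_ne_of_im ha hb hx (ω := b * Complex.I) (by simp) (two_mul_half3 ha hb)
  rw [rectE3_eq] at this
  exact_mod_cast this

lemma rectR_tendsto : Filter.Tendsto (rectR ha hb) (nhdsWithin 0 (Set.Ioi 0)) Filter.atTop := by
  have h1 := (rectPair a b ha hb).tendsto_sq_mul_weierstrassP
  have h2 : Filter.Tendsto (fun x : ℝ => (x : ℂ)) (nhdsWithin 0 (Set.Ioi 0))
      (nhdsWithin 0 {0}ᶜ) := by
    apply tendsto_nhdsWithin_iff.mpr
    constructor
    · have : ContinuousAt (fun x : ℝ => (x : ℂ)) 0 := by fun_prop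
      have := this.tendsto
      rw [Complex.ofReal_zero] at this
      exact this.mono_left nhdsWithin_le_nhds
    · filter_upwards [self_mem_nhdsWithin] with x hx
      simpa using (ne_of_gt hx)
  have h3 := (Complex.continuous_re.tendsto _).comp (h1.comp h2)
  have h4 : Filter.Tendsto (fun x : ℝ => x ^ 2 * rectR ha hb x) (nhdsWithin 0 (Set.Ioi 0))
      (nhds 1) := by
    refine h3.congr fun x => ?_
    simp only [Function.comp_apply]
    rw [rectR_eq]
    norm_cast
  have h5 : Filter.Tendsto (fun x : ℝ => (x ^ 2)⁻¹) (nhdsWithin 0 (Set.Ioi 0)) Filter.atTop := by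
    have : Filter.Tendsto (fun x : ℝ => (x⁻¹) ^ 2) (nhdsWithin 0 (Set.Ioi 0)) Filter.atTop :=
      (Filter.tendsto_pow_atTop (by norm_num)).comp tendsto_inv_nhdsGT_zero
    simpa using this
  refine (h4.pos_mul_atTop one_pos h5).congr' ?_
  filter_upwards [self_mem_nhdsWithin] with x hx
  have : x ≠ 0 := ne_of_gt hx
  field_simp

lemma rectR_continuousOn : ContinuousOn (rectR ha hb) (Set.Ioc 0 a) := fun _ hx =>
  (rectR_hasDerivAt ha hb hx).continuousAt.continuousWithinAt

/-- `℘'` has no zero on `(0, a)`, so its sign is constant there by Darboux's theorem; the pole at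
`0` excludes the positive sign. -/
lemma rectR_deriv_neg : ∀ x ∈ Set.Ioo 0 a, ((rectPair a b ha hb).derivWeierstrassP x).re < 0 := by
  have hne : ∀ x ∈ Set.Ioo 0 a, ((rectPair a b ha hb).derivWeierstrassP x).re ≠ 0 := by
    intro x hx h
    have hx' : x ∈ Set.Ioc 0 a := ⟨hx.1, hx.2.le⟩
    have := rectR_deriv_sq ha hb hx'
    rw [h] at this
    have h0 : 4 * (rectR ha hb x - rectE1 ha hb) *
      (rectR ha hb x - rectE2 ha hb) * (rectR ha hb x - rectE3 ha hb) ≠ 0 :=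
      mul_ne_zero (mul_ne_zero (mul_ne_zero (by norm_num) (sub_ne_zero.mpr (rectR_ne ha hb hx)))
        (sub_ne_zero.mpr (rectR_ne2 ha hb hx'))) (sub_ne_zero.mpr (rectR_ne3 ha hb hx'))
    exact h0 (by rw [← this]; norm_num)
  rcases hasDerivWithinAt_forall_lt_or_forall_gt_of_forall_ne (convex_Ioo 0 a)
    (fun x hx => (rectR_hasDerivAt ha hb ⟨hx.1, hx.2.le⟩).hasDerivWithinAt) hne with h | h
  · exact h
  · exfalso
    have hmono : StrictMonoOn (rectR ha hb) (Set.Ioo 0 a) := by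
      apply strictMonoOn_of_deriv_pos (convex_Ioo 0 a)
      · exact (rectR_continuousOn ha hb).mono Set.Ioo_subset_Ioc_self
      · intro x hx
        rw [interior_Ioo] at hx
        rw [(rectR_hasDerivAt ha hb ⟨hx.1, hx.2.le⟩).deriv]
        exact h x hx
    have h1 := (rectR_tendsto ha hb).eventually_gt_atTop (rectR ha hb (a / 2))
    have h2 : ∀ᶠ x in nhdsWithin (0 : ℝ) (Set.Ioi 0), x ∈ Set.Ioo 0 (a / 2) :=
      Ioo_mem_nhdsGT (by linarith)
    obtain ⟨x, hx1, hx2⟩ := (h1.and h2).exists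
    have := hmono ⟨hx2.1, by linarith [hx2.2]⟩ ⟨by linarith, by linarith⟩ hx2.2
    linarith

lemma rectR_strictAnti : StrictAntiOn (rectR ha hb) (Set.Ioc 0 a) := by
  apply strictAntiOn_of_deriv_neg (convex_Ioc 0 a) (rectR_continuousOn ha hb)
  intro x hx
  rw [interior_Ioc] at hx
  rw [(rectR_hasDerivAt ha hb ⟨hx.1, hx.2.le⟩).deriv]
  exact rectR_deriv_neg ha hb x hx

lemma rectR_a : rectR ha hb a = rectE1 ha hb := rfl

lemma rectR_surj {y : ℝ} (hy : rectE1 ha hb ≤ y) : ∃ x ∈ Set.Ioc 0 a, rectR ha hb x = y := by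
  have h1 := (rectR_tendsto ha hb).eventually_gt_atTop y
  have h2 : ∀ᶠ x in nhdsWithin (0 : ℝ) (Set.Ioi 0), x ∈ Set.Ioo 0 a := Ioo_mem_nhdsGT ha
  obtain ⟨x, hx1, hx2⟩ := (h1.and h2).exists
  have hsub : Set.Icc x a ⊆ Set.Ioc 0 a := fun t ht => ⟨lt_of_lt_of_le hx2.1 ht.1, ht.2⟩
  obtain ⟨t, ht, hty⟩ := intermediate_value_Icc' hx2.2.le ((rectR_continuousOn ha hb).mono hsub)
    (show y ∈ Set.Icc (rectR ha hb a) (rectR ha hb x) from ⟨hy, hx1.le⟩)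
  exact ⟨t, hsub ht, hty⟩

/-- On `(0, a]` the function `℘` takes every value `≥ e₁`, but never the value `e₂`. -/
lemma rectE2_lt_rectE1 : rectE2 ha hb < rectE1 ha hb := by
  by_contra h
  obtain ⟨x, hx, hxy⟩ := rectR_surj ha hb (not_lt.mp h)
  exact rectR_ne2 ha hb hx hxy

lemma rectE3_lt_rectE2 : rectE3 ha hb < rectE2 ha hb := by
  have := rectE2_lt_rectE1 hb ha
  obtain ⟨h1, h2, -⟩ := rectE_swap ha hb
  linarith

end Rect

/-! ### Complete elliptic integrals as periods -/

lemma ellipticK_pos_aux {k : ℝ} (hk : k ^ 2 < 1) (θ : ℝ) : 0 < 1 - k ^ 2 * Real.sin θ ^ 2 := by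
  nlinarith [Real.sin_sq_le_one θ, sq_nonneg k, sq_nonneg (Real.sin θ)]

lemma ellipticK_continuous {k : ℝ} (hk : k ^ 2 < 1) :
    Continuous fun θ : ℝ => (1 - k ^ 2 * Real.sin θ ^ 2) ^ (-(1 / 2) : ℝ) := by
  apply Continuous.rpow_const (by fun_prop)
  intro θ; left; exact (ellipticK_pos_aux hk θ).ne'

lemma ellipticK_pos {k : ℝ} (hk : k ^ 2 < 1) : 0 < ellipticK k := by
  unfold ellipticK
  apply intervalIntegral.intervalIntegral_pos_of_pos_on
  · exact (ellipticK_continuous hk).intervalIntegrable _ _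
  · intro θ _
    exact Real.rpow_pos_of_pos (ellipticK_pos_aux hk θ) _
  · positivity

lemma ellipticK_lt {k l : ℝ} (hk : 0 ≤ k) (hkl : k < l) (hl : l < 1) :
    ellipticK k < ellipticK l := by
  have hk1 : k ^ 2 < 1 := by nlinarith
  have hl1 : l ^ 2 < 1 := by nlinarith
  have hkl2 : k ^ 2 < l ^ 2 := by nlinarith
  unfold ellipticK
  apply intervalIntegral.integral_lt_integral_of_continuousOn_of_le_of_exists_lt
  · positivity
  · exact (ellipticK_continuous hk1).continuousOn
  · exact (ellipticK_continuous hl1).continuousOn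
  · intro θ _
    apply Real.rpow_le_rpow_of_nonpos (ellipticK_pos_aux hl1 θ) _ (by norm_num)
    nlinarith [sq_nonneg (Real.sin θ)]
  · refine ⟨π / 2, ⟨by positivity, le_refl _⟩, ?_⟩
    apply Real.rpow_lt_rpow_of_neg (ellipticK_pos_aux hl1 _) _ (by norm_num)
    simp; linarith

/-- The pairs `(K(k), K(k'))` for different `k` are not proportional, since `K(k)` increases and
`K(k')` decreases in `k`. -/
lemma modulus_unique {k l s : ℝ} (hk : k ∈ Set.Ioo (0 : ℝ) 1) (hl : l ∈ Set.Ioo (0 : ℝ) 1)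
    (h1 : ellipticK l = s * ellipticK k)
    (h2 : ellipticK (√(1 - l ^ 2)) = s * ellipticK (√(1 - k ^ 2))) : s = 1 := by
  have hpos : ∀ x ∈ Set.Ioo (0 : ℝ) 1, 0 < ellipticK x ∧ 0 < ellipticK (√(1 - x ^ 2)) := by
    intro x hx
    refine ⟨ellipticK_pos (by nlinarith [hx.1, hx.2]), ellipticK_pos ?_⟩
    rw [Real.sq_sqrt (by nlinarith [hx.1, hx.2])]; nlinarith [hx.1]
  have hlt : ∀ x ∈ Set.Ioo (0 : ℝ) 1, ∀ y ∈ Set.Ioo (0 : ℝ) 1, x < y → ellipticK x < ellipticK y ∧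
      ellipticK (√(1 - y ^ 2)) < ellipticK (√(1 - x ^ 2)) := by
    intro x hx y hy hxy
    refine ⟨ellipticK_lt hx.1.le hxy hy.2, ellipticK_lt (Real.sqrt_nonneg _) ?_ ?_⟩
    · apply Real.sqrt_lt_sqrt <;> nlinarith [hx.1, hx.2, hy.1, hy.2]
    · rw [Real.sqrt_lt' one_pos]; nlinarith [hx.1]
  obtain ⟨p1, p2⟩ := hpos k hk
  rcases lt_trichotomy k l with h | h | h
  · obtain ⟨q1, q2⟩ := hlt k hk l hl h
    rw [h1] at q1; rw [h2] at q2
    have : 1 < s := by by_contra hs; nlinarith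
    nlinarith
  · subst h
    have : (s - 1) * ellipticK k = 0 := by linarith
    rcases mul_eq_zero.mp this with h | h <;> linarith
  · obtain ⟨q1, q2⟩ := hlt l hl k hk h
    rw [h1] at q1; rw [h2] at q2
    have : 1 < s := by by_contra hs; nlinarith
    nlinarith

section Rect

variable {a b : ℝ} (ha : 0 < a) (hb : 0 < b)

/-- The period `a` as a complete elliptic integral: the substitution
`sin² θ = (e₁ - e₃) / (℘(x) - e₃)` turns the differential equation of `℘` into
`dθ / √(1 - k² sin² θ) = √(e₁ - e₃) dx`. -/
lemma ellipticK_rect (k : ℝ)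
    (hk : k ^ 2 = (rectE2 ha hb - rectE3 ha hb) / (rectE1 ha hb - rectE3 ha hb)) :
    ellipticK k = √(rectE1 ha hb - rectE3 ha hb) * a := by
  have h12 := rectE2_lt_rectE1 ha hb
  have h23 := rectE3_lt_rectE2 ha hb
  have hr1 : ∀ x ∈ Set.Ioo 0 a, rectE1 ha hb < rectR ha hb x := fun x hx => by
    rw [← rectR_a ha hb]
    exact rectR_strictAnti ha hb ⟨hx.1, hx.2.le⟩ ⟨ha, le_refl _⟩ hx.2
  have hr1' : ∀ x ∈ Set.Ioc 0 a, rectE1 ha hb ≤ rectR ha hb x := fun x hx => by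
    rw [← rectR_a ha hb]
    exact (rectR_strictAnti ha hb).antitoneOn hx ⟨ha, le_refl _⟩ hx.2
  have hdsq := fun x hx => rectR_deriv_sq ha hb (x := x) hx
  have hdneg := rectR_deriv_neg ha hb
  have hder := fun x hx => rectR_hasDerivAt ha hb (x := x) hx
  have hra := rectR_a ha hb
  have hcont := rectR_continuousOn ha hb
  have hlim := rectR_tendsto ha hb
  generalize rectE1 ha hb = e₁ at *
  generalize rectE2 ha hb = e₂ at *
  generalize rectE3 ha hb = e₃ at *
  generalize rectR ha hb = r at *
  set r' : ℝ → ℝ := fun x => ((rectPair a b ha hb).derivWeierstrassP x).re with hr'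
  have hd : 0 < e₁ - e₃ := by linarith
  have hk1 : k ^ 2 < 1 := by rw [hk, div_lt_one hd]; linarith
  set f : ℝ → ℝ := fun θ => (1 - k ^ 2 * Real.sin θ ^ 2) ^ (-(1 / 2) : ℝ) with hf
  have hfc : Continuous f := ellipticK_continuous hk1
  set Φ : ℝ → ℝ := fun φ => ∫ θ in (0 : ℝ)..φ, f θ with hΦ
  have hΦd : ∀ φ, HasDerivAt Φ (f φ) φ := fun φ => hfc.integral_hasStrictDerivAt 0 φ |>.hasDerivAt
  have hΦc : Continuous Φ := continuous_iff_continuousAt.mpr fun φ => (hΦd φ).continuousAt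
  set θ : ℝ → ℝ := fun x => Real.arcsin (√((e₁ - e₃) / (r x - e₃))) with hθ
  have hderiv : ∀ x ∈ Set.Ioo 0 a, HasDerivAt (fun x => Φ (θ x)) (√(e₁ - e₃)) x := by
    intro x hx
    have hx' : x ∈ Set.Ioc 0 a := ⟨hx.1, hx.2.le⟩
    have hR := hr1 x hx
    have hR3 : 0 < r x - e₃ := by linarith
    have hw : 0 < (e₁ - e₃) / (r x - e₃) := div_pos hd hR3
    have hw1 : (e₁ - e₃) / (r x - e₃) < 1 := by rw [div_lt_one hR3]; linarith
    have hdw : HasDerivAt (fun x => (e₁ - e₃) / (r x - e₃))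
        (-((e₁ - e₃) * r' x) / (r x - e₃) ^ 2) x := by
      have := (hasDerivAt_const x (e₁ - e₃)).div ((hder x hx').sub_const e₃) hR3.ne'
      refine this.congr_deriv ?_
      simp [hr']
    have hS : √((e₁ - e₃) / (r x - e₃)) < 1 := by
      rw [Real.sqrt_lt' one_pos]; simpa using hw1
    have hS0 : 0 < √((e₁ - e₃) / (r x - e₃)) := Real.sqrt_pos.mpr hw
    have hdS := hdw.sqrt hw.ne'
    have hdθ := (Real.hasDerivAt_arcsin (by linarith) hS.ne).comp x hdS
    have hdΦ := (hΦd (θ x)).comp x hdθ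
    refine hdΦ.congr_deriv ?_
    have hsin : Real.sin (θ x) = √((e₁ - e₃) / (r x - e₃)) :=
      Real.sin_arcsin (by linarith) hS.le
    have hfv : f (θ x) = (√((r x - e₂) / (r x - e₃)))⁻¹ := by
      simp only [hf]
      rw [hsin, Real.sq_sqrt hw.le, hk, Real.rpow_neg, ← Real.sqrt_eq_rpow]
      · congr 2; field_simp; ring
      · have : (e₂ - e₃) / (e₁ - e₃) * ((e₁ - e₃) / (r x - e₃)) ≤ 1 := by
          rw [div_mul_div_cancel₀ hd.ne', div_le_one hR3]; linarith
        linarith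
    rw [hfv, Real.sq_sqrt hw.le]
    have hu : 0 < (r x - e₂) / (r x - e₃) := div_pos (by linarith) hR3
    have hv : 0 < 1 - (e₁ - e₃) / (r x - e₃) := by linarith
    -- both sides are positive, so it suffices to compare squares
    refine (sq_eq_sq₀ ?_ (Real.sqrt_nonneg _)).mp ?_
    · have : 0 < -((e₁ - e₃) * r' x) := by nlinarith [hdneg x hx]
      positivity
    · rw [Real.sq_sqrt hd.le]
      simp only [mul_pow, div_pow, inv_pow, one_pow]
      rw [Real.sq_sqrt hw.le, Real.sq_sqrt hu.le, Real.sq_sqrt hv.le, neg_sq, mul_pow,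
        show r' x ^ 2 = _ from hdsq x hx']
      have n1 : r x - e₁ ≠ 0 := by linarith
      have n2 : r x - e₂ ≠ 0 := by linarith
      have n3 : r x - e₃ ≠ 0 := hR3.ne'
      have n4 : e₁ - e₃ ≠ 0 := hd.ne'
      rw [show 1 - (e₁ - e₃) / (r x - e₃) = (r x - e₁) / (r x - e₃) by field_simp; ring]
      field_simp
      norm_num
  have hθc : ContinuousOn θ (Set.Ioc 0 a) := by
    apply Real.continuous_arcsin.comp_continuousOn
    apply ContinuousOn.sqrt
    apply continuousOn_const.div (hcont.sub continuousOn_const)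
    intro x hx
    have := hr1' x hx
    intro h
    change r x - e₃ = 0 at h
    linarith
  have hθa : θ a = π / 2 := by
    simp only [hθ]; rw [hra, div_self hd.ne']; simp
  have hstep : ∀ y ∈ Set.Ioo 0 a, √(e₁ - e₃) * (a - y) = Φ (π / 2) - Φ (θ y) := by
    intro y hy
    have h := intervalIntegral.integral_eq_sub_of_hasDerivAt_of_le hy.2.le
      (f := fun x => Φ (θ x)) (f' := fun _ => √(e₁ - e₃))
      ((hΦc.comp_continuousOn hθc).mono fun t ht => ⟨lt_of_lt_of_le hy.1 ht.1, ht.2⟩)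
      (fun t ht => hderiv t ⟨hy.1.trans ht.1, ht.2⟩) (by simp)
    simp only [intervalIntegral.integral_const, smul_eq_mul, hθa] at h
    rw [← h]; ring
  have hθ0 : Filter.Tendsto θ (nhdsWithin 0 (Set.Ioi 0)) (nhds 0) := by
    have h1 : Filter.Tendsto (fun x => (e₁ - e₃) / (r x - e₃)) (nhdsWithin 0 (Set.Ioi 0))
        (nhds 0) :=
      Filter.Tendsto.const_div_atTop (Filter.tendsto_atTop_add_const_right _ (-e₃) hlim) _
    have h2 := (Real.continuous_arcsin.comp Real.continuous_sqrt).tendsto 0 |>.comp h1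
    simpa [Function.comp_def] using h2
  have hL : Filter.Tendsto (fun y => Φ (π / 2) - Φ (θ y)) (nhdsWithin 0 (Set.Ioi 0))
      (nhds (Φ (π / 2) - Φ 0)) := tendsto_const_nhds.sub ((hΦc.tendsto 0).comp hθ0)
  have hR : Filter.Tendsto (fun y => √(e₁ - e₃) * (a - y)) (nhdsWithin 0 (Set.Ioi 0))
      (nhds (√(e₁ - e₃) * (a - 0))) := by
    have : ContinuousAt (fun y => √(e₁ - e₃) * (a - y)) 0 := by fun_prop
    exact this.tendsto.mono_left nhdsWithin_le_nhds
  have hL' := hR.congr' (Filter.eventually_of_mem (Ioo_mem_nhdsGT ha) hstep)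
  have := tendsto_nhds_unique hL hL'
  simp only [hΦ, intervalIntegral.integral_same, sub_zero] at this
  exact this

/-- If the half-periods are `K(k)` and `iK(k')`, then `e₁ - e₃ = 1`. -/
lemma rectE_sub_eq_one {k : ℝ} (hk : k ∈ Set.Ioo (0 : ℝ) 1)
    (h1 : a = ellipticK k) (h2 : b = ellipticK (√(1 - k ^ 2))) :
    rectE1 ha hb - rectE3 ha hb = 1 := by
  have h12 := rectE2_lt_rectE1 ha hb
  have h23 := rectE3_lt_rectE2 ha hb
  obtain ⟨s1, s2, s3⟩ := rectE_swap ha hb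
  have hd : 0 < rectE1 ha hb - rectE3 ha hb := by linarith
  set q := (rectE2 ha hb - rectE3 ha hb) / (rectE1 ha hb - rectE3 ha hb) with hq
  have hq0 : 0 < q := div_pos (by linarith) hd
  have hq1 : q < 1 := by rw [hq, div_lt_one hd]; linarith
  have hsq : √q ^ 2 = q := Real.sq_sqrt hq0.le
  have e1 := ellipticK_rect ha hb (√q) hsq
  have e2 := ellipticK_rect hb ha (√(1 - √q ^ 2)) (by
    rw [hsq, Real.sq_sqrt (by linarith), s1, s2, s3, hq]
    have : -rectE3 ha hb - -rectE1 ha hb ≠ 0 := by linarith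
    field_simp; ring)
  have hs : rectE1 hb ha - rectE3 hb ha = rectE1 ha hb - rectE3 ha hb := by
    rw [s1, s3]; ring
  rw [hs] at e2
  have := modulus_unique hk (l := √q) ⟨Real.sqrt_pos.mpr hq0, by
    rw [Real.sqrt_lt' one_pos]; linarith⟩ (e1.trans (congrArg _ h1)) (e2.trans (congrArg _ h2))
  have h3 := Real.sq_sqrt hd.le
  rw [this] at h3
  linarith

end Rect

/-! ### Laplace-type integrals as double series -/

section Laplace

lemma integral_pow_mul_exp_neg (n : ℕ) {r : ℝ} (hr : 0 < r) :
    ∫ t in Set.Ioi (0 : ℝ), t ^ n * Real.exp (-(r * t)) = n.factorial / r ^ (n + 1) := by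
  have h := Real.integral_rpow_mul_exp_neg_mul_Ioi (a := n + 1) (by positivity) hr
  rw [Real.Gamma_nat_eq_factorial] at h
  have h2 : (1 / r) ^ ((n : ℝ) + 1) = (1 / r) ^ (n + 1) := by
    rw [← Real.rpow_natCast]; norm_num
  rw [h2] at h
  simp only [add_sub_cancel_right, Real.rpow_natCast] at h
  rw [h]; simp; ring

lemma integrableOn_pow_mul_exp_neg (n : ℕ) {r : ℝ} (hr : 0 < r) :
    IntegrableOn (fun t : ℝ => t ^ n * Real.exp (-(r * t))) (Set.Ioi 0) := by
  apply Integrable.of_integral_ne_zero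
  rw [integral_pow_mul_exp_neg n hr]
  positivity

lemma norm_exp_neg_mul (c : ℂ) (t : ℝ) : ‖Complex.exp (-(c * t))‖ = Real.exp (-(c.re * t)) := by
  rw [Complex.norm_exp]; simp

lemma integrableOn_mul_cexp {c : ℂ} (hc : 0 < c.re) :
    IntegrableOn (fun t : ℝ => (t : ℂ) * Complex.exp (-(c * t))) (Set.Ioi 0) := by
  refine Integrable.mono' (integrableOn_pow_mul_exp_neg 1 hc)
    (by fun_prop) ?_
  filter_upwards [ae_restrict_mem measurableSet_Ioi] with t ht
  rw [norm_mul, norm_exp_neg_mul, Complex.norm_real, Real.norm_of_nonneg (le_of_lt ht), pow_one]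

lemma integral_mul_cexp {c : ℂ} (hc : 0 < c.re) :
    ∫ t in Set.Ioi (0 : ℝ), (t : ℂ) * Complex.exp (-(c * t)) = 1 / c ^ 2 := by
  have hc0 : c ≠ 0 := by rintro rfl; simp at hc
  have hd : ∀ t : ℝ, HasDerivAt (fun t : ℝ => -((t : ℂ) / c + 1 / c ^ 2) * Complex.exp (-(c * t)))
      ((t : ℂ) * Complex.exp (-(c * t))) t := by
    intro t
    have h1 : HasDerivAt (fun z : ℂ => -(z / c + 1 / c ^ 2) * Complex.exp (-(c * z)))
      ((t : ℂ) * Complex.exp (-(c * t))) (t : ℂ) := by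
      have e1 : HasDerivAt (fun z : ℂ => -(z / c + 1 / c ^ 2)) (-(1 / c)) (t : ℂ) :=
        (((hasDerivAt_id _).div_const c).add_const _).neg
      have e2 : HasDerivAt (fun z : ℂ => -(c * z)) (-(c * 1)) (t : ℂ) :=
        ((hasDerivAt_id _).const_mul c).neg
      refine (e1.mul e2.cexp).congr_deriv ?_
      field_simp; ring
    exact h1.comp_ofReal
  have hlim : Filter.Tendsto (fun t : ℝ => -((t : ℂ) / c + 1 / c ^ 2) * Complex.exp (-(c * t)))
      Filter.atTop (nhds 0) := by
    rw [tendsto_zero_iff_norm_tendsto_zero]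
    have l1 := Real.tendsto_pow_mul_exp_neg_atTop_nhds_zero 1
    have l2 := Real.tendsto_pow_mul_exp_neg_atTop_nhds_zero 0
    have hm : Filter.Tendsto (fun t : ℝ => c.re * t) Filter.atTop Filter.atTop :=
      Filter.tendsto_id.const_mul_atTop hc
    have l3 := ((l1.comp hm).const_mul (1 / (c.re * ‖c‖))).add
      ((l2.comp hm).const_mul (1 / ‖c‖ ^ 2))
    simp only [mul_zero, add_zero] at l3
    refine squeeze_zero' (Filter.Eventually.of_forall fun _ => norm_nonneg _) ?_ l3
    filter_upwards [Filter.eventually_ge_atTop 0] with t ht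
    rw [norm_mul, norm_exp_neg_mul, norm_neg]
    have : ‖(t : ℂ) / c + 1 / c ^ 2‖ ≤ t / ‖c‖ + 1 / ‖c‖ ^ 2 := by
      refine (norm_add_le _ _).trans ?_
      simp [abs_of_nonneg ht]
    refine (mul_le_mul_of_nonneg_right this (Real.exp_nonneg _)).trans (le_of_eq ?_)
    have : ‖c‖ ≠ 0 := by simpa using hc0
    simp only [Function.comp_apply]
    field_simp
  have := integral_Ioi_of_hasDerivAt_of_tendsto' (fun t _ => hd t) (integrableOn_mul_cexp hc) hlim
  rw [this]; simp

lemma norm_one_sub_cexp_le {w : ℂ} (hw : 0 ≤ w.re) : ‖1 - Complex.exp (-w)‖ ≤ ‖w‖ := by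
  have h := Convex.norm_image_sub_le_of_norm_hasDerivWithin_le (𝕜 := ℂ)
    (f := fun z => Complex.exp (-z)) (f' := fun z => -Complex.exp (-z)) (s := {z | 0 ≤ z.re})
    (x := w) (y := 0) (C := 1) ?_ ?_ (convex_halfSpace_re_ge 0) hw (by simp)
  · simpa using h
  · intro x _
    have : HasDerivAt (fun z : ℂ => Complex.exp (-z)) (Complex.exp (-x) * (-1)) x :=
      (hasDerivAt_neg x).cexp
    simpa using this.hasDerivWithinAt
  · intro x hx
    rw [norm_neg, Complex.norm_exp]
    simpa using hx

/-- The geometric expansion of `1 / (2 cosh w)`, with consecutive terms paired. -/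
lemma hasSum_inv_cosh {w : ℂ} (hw : 0 < w.re) :
    HasSum (fun m : ℕ => Complex.exp (-((4 * m + 1) * w)) - Complex.exp (-((4 * m + 3) * w)))
      (1 / (2 * Complex.cosh w)) ∧
    Summable (fun m : ℕ => ‖Complex.exp (-((4 * m + 1) * w)) - Complex.exp (-((4 * m + 3) * w))‖) := by
  set E := Complex.exp (-w) with hE
  have hE1 : ‖E‖ < 1 := by rw [hE, Complex.norm_exp]; simpa using hw
  have hE0 : E ≠ 0 := Complex.exp_ne_zero _
  have hE4 : ‖E ^ 4‖ < 1 := by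
    rw [norm_pow]; exact pow_lt_one₀ (norm_nonneg _) hE1 (by norm_num)
  have hterm : ∀ m : ℕ, Complex.exp (-((4 * m + 1) * w)) - Complex.exp (-((4 * m + 3) * w))
      = (E - E ^ 3) * (E ^ 4) ^ m := by
    intro m
    have e1 : Complex.exp (-((4 * m + 1) * w)) = E ^ (4 * m + 1) := by
      rw [hE, ← Complex.exp_nat_mul]; congr 1; push_cast; ring
    have e2 : Complex.exp (-((4 * m + 3) * w)) = E ^ (4 * m + 3) := by
      rw [hE, ← Complex.exp_nat_mul]; congr 1; push_cast; ring
    rw [e1, e2]; ring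
  simp only [hterm]
  constructor
  · have h := (hasSum_geometric_of_norm_lt_one hE4).mul_left (E - E ^ 3)
    suffices hv : 1 / (2 * Complex.cosh w) = (E - E ^ 3) * (1 - E ^ 4)⁻¹ by rw [hv]; exact h
    have hc : 2 * Complex.cosh w = E⁻¹ + E := by
      rw [Complex.two_cosh, hE, Complex.exp_neg, inv_inv]
    have h2 : ‖E ^ 2‖ < 1 := by
      rw [norm_pow]; exact pow_lt_one₀ (norm_nonneg _) hE1 (by norm_num)
    have n1 : 1 - E ^ 2 ≠ 0 := by
      intro h; rw [← sub_eq_zero.mp h] at h2; simp at h2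
    have n2 : 1 + E ^ 2 ≠ 0 := by
      intro h; rw [eq_neg_of_add_eq_zero_right h] at h2; simp at h2
    have n4 : 1 - E ^ 4 = (1 - E ^ 2) * (1 + E ^ 2) := by ring
    have n5 : E⁻¹ + E = (1 + E ^ 2) / E := by field_simp
    rw [hc, n4, n5]
    field_simp
  · simp only [norm_mul, norm_pow]
    apply Summable.mul_left
    apply summable_geometric_of_lt_one (by positivity)
    rw [← norm_pow]; exact hE4

/-- Comparison with a product of two one-dimensional series, by
`(X + Y)³ ≥ X^(3/2) Y^(3/2)`. -/
lemma summable_cube {p q : ℝ} (hp : 0 < p) (hq : 0 < q) :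
    Summable fun i : ℕ × ℕ => 1 / ((4 * i.1 + 1) * p + (4 * i.2 + 1) * q) ^ 3 := by
  have hs : Summable fun n : ℕ => 1 / ((n : ℝ) + 1) ^ (3 / 2 : ℝ) := by
    have := (Real.summable_one_div_nat_add_rpow 1 (3 / 2)).mpr (by norm_num)
    refine this.congr fun n => ?_
    rw [abs_of_nonneg (by positivity)]
  have hs2 := (hs.mul_of_nonneg hs (fun n => by positivity) (fun n => by positivity)).mul_left
    (1 / (p ^ (3 / 2 : ℝ) * q ^ (3 / 2 : ℝ)))
  refine Summable.of_nonneg_of_le (fun i => by positivity) (fun i => ?_) hs2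
  have key : (((i.1 : ℝ) + 1) * p) ^ (3 / 2 : ℝ) * (((i.2 : ℝ) + 1) * q) ^ (3 / 2 : ℝ) ≤
      ((4 * i.1 + 1) * p + (4 * i.2 + 1) * q) ^ 3 := by
    have e : ((4 * i.1 + 1) * p + (4 * i.2 + 1) * q) ^ 3 =
        ((4 * i.1 + 1) * p + (4 * i.2 + 1) * q) ^ (3 / 2 : ℝ) *
        ((4 * i.1 + 1) * p + (4 * i.2 + 1) * q) ^ (3 / 2 : ℝ) := by
      rw [← Real.rpow_add (by positivity), ← Real.rpow_natCast]; norm_num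
    have b1 : ((i.1 : ℝ) + 1) * p ≤ (4 * i.1 + 1) * p + (4 * i.2 + 1) * q := by
      have : 0 ≤ (4 * i.2 + 1) * q := by positivity
      have : 0 ≤ 3 * (i.1 : ℝ) * p := by positivity
      linarith
    have b2 : ((i.2 : ℝ) + 1) * q ≤ (4 * i.1 + 1) * p + (4 * i.2 + 1) * q := by
      have : 0 ≤ (4 * i.1 + 1) * p := by positivity
      have : 0 ≤ 3 * (i.2 : ℝ) * q := by positivity
      linarith
    rw [e]
    gcongr
  rw [Real.mul_rpow (by positivity) hp.le, Real.mul_rpow (by positivity) hq.le] at key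
  refine (one_div_le_one_div_of_le (by positivity) key).trans (le_of_eq ?_)
  field_simp

/-- The alternating sum of `g` over the four odd pairs `(4x + 1, 4y + 1)`, …, `(4x + 3, 4y + 3)`. It
is stated for complex arguments so that it serves for indices in both `ℕ` and `ℤ`. -/
def quadTerm (g : ℂ → ℂ → ℂ) (x y : ℂ) : ℂ :=
  g (4 * x + 1) (4 * y + 1) - g (4 * x + 3) (4 * y + 1)
    - g (4 * x + 1) (4 * y + 3) + g (4 * x + 3) (4 * y + 3)

lemma hasSum_mul_prod {f g : ℕ → ℂ} {s t : ℂ} (hf : HasSum f s) (hg : HasSum g t)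
    (nf : Summable fun n => ‖f n‖) (ng : Summable fun n => ‖g n‖) :
    HasSum (fun i : ℕ × ℕ => f i.1 * g i.2) (s * t) :=
  hf.mul hg (summable_mul_of_summable_norm nf ng)

/-- Expanding `1 / (cosh (αt) cosh (βt))` into exponentials and integrating term by term. -/
lemma hasSum_laplace {α β : ℂ} (hα : 0 < α.re) (hβ : 0 < β.re) :
    HasSum (fun i : ℕ × ℕ => quadTerm (fun M N => 1 / (M * α + N * β) ^ 2) i.1 i.2)
      (∫ t in Set.Ioi (0 : ℝ), (t : ℂ) / (4 * (Complex.cosh (α * t) * Complex.cosh (β * t)))) := by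
  set e : ℂ → ℂ → ℝ → ℂ := fun M N t => (t : ℂ) * Complex.exp (-((M * α + N * β) * t)) with he
  set F : ℕ × ℕ → ℝ → ℂ := fun i t => quadTerm (fun M N => e M N t) i.1 i.2 with hF
  have hre : ∀ m n : ℕ, 0 < m → 0 < n → 0 < ((m : ℂ) * α + (n : ℂ) * β).re := by
    intro m n hm hn
    have : ((m : ℂ) * α + (n : ℂ) * β).re = m * α.re + n * β.re := by simp
    rw [this]; positivity
  have hre' : ∀ (m n c d : ℕ), 0 < c → 0 < d →
      0 < ((4 * (m : ℂ) + (c : ℂ)) * α + (4 * (n : ℂ) + (d : ℂ)) * β).re := by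
    intro m n c d hc hd
    have := hre (4 * m + c) (4 * n + d) (by omega) (by omega)
    push_cast at this; exact this
  have r11 := fun m n => hre' m n 1 1 one_pos one_pos
  have r31 := fun m n => hre' m n 3 1 (by norm_num) one_pos
  have r13 := fun m n => hre' m n 1 3 one_pos (by norm_num)
  have r33 := fun m n => hre' m n 3 3 (by norm_num) (by norm_num)
  simp only [Nat.cast_one, Nat.cast_ofNat] at r11 r31 r13 r33
  have hint : ∀ i, Integrable (F i) (volume.restrict (Set.Ioi 0)) := fun i =>
    (((integrableOn_mul_cexp (r11 i.1 i.2)).sub (integrableOn_mul_cexp (r31 i.1 i.2))).sub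
      (integrableOn_mul_cexp (r13 i.1 i.2))).add (integrableOn_mul_cexp (r33 i.1 i.2))
  have hval : ∀ i, ∫ t in Set.Ioi (0 : ℝ), F i t =
      quadTerm (fun M N => 1 / (M * α + N * β) ^ 2) i.1 i.2 := by
    intro i
    simp only [hF, quadTerm, he]
    rw [integral_add, integral_sub, integral_sub, integral_mul_cexp (r11 i.1 i.2),
      integral_mul_cexp (r31 i.1 i.2), integral_mul_cexp (r13 i.1 i.2),
      integral_mul_cexp (r33 i.1 i.2)]
    · exact integrableOn_mul_cexp (r11 i.1 i.2)
    · exact integrableOn_mul_cexp (r31 i.1 i.2)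
    · exact (integrableOn_mul_cexp (r11 i.1 i.2)).sub (integrableOn_mul_cexp (r31 i.1 i.2))
    · exact integrableOn_mul_cexp (r13 i.1 i.2)
    · exact ((integrableOn_mul_cexp (r11 i.1 i.2)).sub (integrableOn_mul_cexp (r31 i.1 i.2))).sub
        (integrableOn_mul_cexp (r13 i.1 i.2))
    · exact integrableOn_mul_cexp (r33 i.1 i.2)
  have hfac : ∀ (i : ℕ × ℕ) (t : ℝ), F i t = (t : ℂ) *
      ((Complex.exp (-((4 * i.1 + 1) * (α * t))) - Complex.exp (-((4 * i.1 + 3) * (α * t)))) *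
      (Complex.exp (-((4 * i.2 + 1) * (β * t))) - Complex.exp (-((4 * i.2 + 3) * (β * t))))) := by
    intro i t
    have hs : ∀ M N : ℂ, Complex.exp (-((M * α + N * β) * t)) =
        Complex.exp (-(M * (α * t))) * Complex.exp (-(N * (β * t))) := by
      intro M N; rw [← Complex.exp_add]; congr 1; ring
    simp only [hF, quadTerm, he, hs]; ring
  have hbound : ∀ (i : ℕ × ℕ), ∀ t ∈ Set.Ioi (0 : ℝ), ‖F i t‖ ≤ 4 * ‖α‖ *
      (t ^ 2 * Real.exp (-(((4 * i.1 + 1) * α.re + (4 * i.2 + 1) * β.re) * t))) := by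
    intro i t ht
    have ht : 0 < t := ht
    have hd : ∀ (m : ℕ) (w : ℂ), Complex.exp (-((4 * m + 1) * w)) - Complex.exp (-((4 * m + 3) * w))
        = Complex.exp (-((4 * m + 1) * w)) * (1 - Complex.exp (-(2 * w))) := by
      intro m w; rw [mul_sub, ← Complex.exp_add]; ring_nf
    have hn : ∀ (m : ℕ) (w : ℂ), ‖Complex.exp (-((4 * m + 1) * w))‖ =
        Real.exp (-((4 * m + 1) * w.re)) := by
      intro m w; rw [Complex.norm_exp]; simp
    have h1 : ‖1 - Complex.exp (-(2 * (α * t)))‖ ≤ 2 * ‖α‖ * t := by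
      refine (norm_one_sub_cexp_le ?_).trans (le_of_eq ?_)
      · simp; positivity
      · simp [abs_of_pos ht]; ring
    have h2 : ‖1 - Complex.exp (-(2 * (β * t)))‖ ≤ 2 := by
      refine (norm_sub_le _ _).trans ?_
      rw [Complex.norm_exp]
      have : Real.exp ((-(2 * (β * t))).re) ≤ 1 := by
        rw [Real.exp_le_one_iff]; simp; positivity
      simp only [norm_one]; linarith
    rw [hfac, norm_mul, norm_mul, hd, hd, norm_mul, norm_mul, hn, hn, Complex.norm_real,
      Real.norm_of_nonneg ht.le]
    have e1 : Real.exp (-(((4 * i.1 + 1) * α.re + (4 * i.2 + 1) * β.re) * t)) =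
        Real.exp (-((4 * i.1 + 1) * (α * t).re)) * Real.exp (-((4 * i.2 + 1) * (β * t).re)) := by
      rw [← Real.exp_add]; congr 1; simp; ring
    rw [e1]
    calc _ ≤ t * (Real.exp (-((4 * i.1 + 1) * (α * t).re)) * (2 * ‖α‖ * t) *
          (Real.exp (-((4 * i.2 + 1) * (β * t).re)) * 2)) := by gcongr
      _ = _ := by ring
  have hsum : Summable fun i => ∫ t in Set.Ioi (0 : ℝ), ‖F i t‖ := by
    refine Summable.of_nonneg_of_le (fun i => by positivity) (fun i => ?_)
      ((summable_cube hα hβ).mul_left (8 * ‖α‖))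
    have hr : 0 < (4 * i.1 + 1) * α.re + (4 * i.2 + 1) * β.re := by positivity
    calc ∫ t in Set.Ioi (0 : ℝ), ‖F i t‖ ≤ ∫ t in Set.Ioi (0 : ℝ), 4 * ‖α‖ *
          (t ^ 2 * Real.exp (-(((4 * i.1 + 1) * α.re + (4 * i.2 + 1) * β.re) * t))) :=
          setIntegral_mono_on (hint i).norm ((integrableOn_pow_mul_exp_neg 2 hr).const_mul _)
            measurableSet_Ioi (hbound i)
      _ = _ := by
        rw [integral_const_mul, integral_pow_mul_exp_neg 2 hr]
        simp only [Nat.factorial]; push_cast; ring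
  have hmain := hasSum_integral_of_summable_integral_norm hint hsum
  simp only [hval] at hmain
  suffices hv : ∫ t in Set.Ioi (0 : ℝ), (t : ℂ) /
      (4 * (Complex.cosh (α * t) * Complex.cosh (β * t))) =
      ∫ t in Set.Ioi (0 : ℝ), ∑' i, F i t by rw [hv]; exact hmain
  refine setIntegral_congr_fun measurableSet_Ioi fun t ht => ?_
  have ht : 0 < t := ht
  obtain ⟨a1, a2⟩ := hasSum_inv_cosh (w := α * t) (by simp; positivity)
  obtain ⟨b1, b2⟩ := hasSum_inv_cosh (w := β * t) (by simp; positivity)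
  have h := (hasSum_mul_prod a1 b1 a2 b2).mul_left (t : ℂ)
  have h2 : HasSum (fun i => F i t) ((t : ℂ) *
      (1 / (2 * Complex.cosh (α * t)) * (1 / (2 * Complex.cosh (β * t))))) :=
    h.congr_fun fun i => hfac i t
  calc (t : ℂ) / (4 * (Complex.cosh (α * t) * Complex.cosh (β * t)))
      = (t : ℂ) * (1 / (2 * Complex.cosh (α * t)) * (1 / (2 * Complex.cosh (β * t)))) := by
        rw [one_div_mul_one_div, mul_one_div]; ring
    _ = ∑' i, F i t := h2.tsum_eq.symm

end Laplace

/-! ### Lattice sums -/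

lemma HasSum.of_two_injective {ι κ : Type*} {f : ι → ℂ} {i j : κ → ι} {s t : ℂ}
    (hi : Function.Injective i) (hj : Function.Injective j)
    (hd : ∀ x y, i x ≠ j y) (hc : ∀ z, (∃ x, i x = z) ∨ ∃ y, j y = z)
    (h1 : HasSum (f ∘ i) s) (h2 : HasSum (f ∘ j) t) : HasSum f (s + t) := by
  refine HasSum.add_isCompl (s := Set.range i) (t := Set.range j) ?_
    (hi.hasSum_range_iff.mpr h1) (hj.hasSum_range_iff.mpr h2)
  constructor
  · rw [Set.disjoint_iff]
    rintro z ⟨⟨x, rfl⟩, ⟨y, hy⟩⟩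
    exact hd x y hy.symm
  · rw [codisjoint_iff_le_sup]
    intro z _
    exact hc z

/-- Splitting a sum over `ℤ × ℤ` into the four quadrants. -/
lemma hasSum_quadrants {f : ℤ → ℤ → ℂ} {s₁ s₂ s₃ s₄ : ℂ}
    (h1 : HasSum (fun p : ℕ × ℕ => f p.1 p.2) s₁)
    (h2 : HasSum (fun p : ℕ × ℕ => f p.1 (-p.2 - 1)) s₂)
    (h3 : HasSum (fun p : ℕ × ℕ => f (-p.1 - 1) p.2) s₃)
    (h4 : HasSum (fun p : ℕ × ℕ => f (-p.1 - 1) (-p.2 - 1)) s₄) :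
    HasSum (fun p : ℤ × ℤ => f p.1 p.2) (s₁ + s₂ + (s₃ + s₄)) := by
  have hy : ∀ (g : ℕ → ℤ → ℂ) {s t : ℂ}, HasSum (fun p : ℕ × ℕ => g p.1 p.2) s →
      HasSum (fun p : ℕ × ℕ => g p.1 (-p.2 - 1)) t →
      HasSum (fun p : ℕ × ℤ => g p.1 p.2) (s + t) := by
    intro g s t hs ht
    refine HasSum.of_two_injective (i := fun p : ℕ × ℕ => (p.1, (p.2 : ℤ)))
      (j := fun p : ℕ × ℕ => (p.1, -(p.2 : ℤ) - 1)) ?_ ?_ ?_ ?_ hs ht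
    · rintro ⟨a, b⟩ ⟨c, d⟩ h; simp at h ⊢; omega
    · rintro ⟨a, b⟩ ⟨c, d⟩ h; simp at h ⊢; omega
    · rintro ⟨a, b⟩ ⟨c, d⟩ h; simp at h; omega
    · rintro ⟨a, b⟩
      rcases le_or_gt 0 b with hb | hb
      · left; exact ⟨(a, b.toNat), by simp [hb]⟩
      · right; exact ⟨(a, (-b - 1).toNat), by simp; omega⟩
  refine HasSum.of_two_injective (i := fun p : ℕ × ℤ => ((p.1 : ℤ), p.2))
      (j := fun p : ℕ × ℤ => (-(p.1 : ℤ) - 1, p.2)) ?_ ?_ ?_ ?_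
      (hy (fun x y => f x y) h1 h2) (hy (fun x y => f (-x - 1) y) h3 h4)
  · rintro ⟨a, b⟩ ⟨c, d⟩ h; simp at h ⊢; omega
  · rintro ⟨a, b⟩ ⟨c, d⟩ h; simp at h ⊢; omega
  · rintro ⟨a, b⟩ ⟨c, d⟩ h; simp at h; omega
  · rintro ⟨a, b⟩
    rcases le_or_gt 0 a with hb | hb
    · left; exact ⟨(a.toNat, b), by simp [hb]⟩
    · right; exact ⟨((-a - 1).toNat, b), by simp; omega⟩

/-- The index-two sublattice of `rectPair a b` with periods `2(a + ib)` and `2(a - ib)`. -/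
noncomputable def diagPair (a b : ℝ) (ha : 0 < a) (hb : 0 < b) : PeriodPair where
  ω₁ := 2 * (a + b * Complex.I)
  ω₂ := 2 * (a - b * Complex.I)
  indep := by
    rw [LinearIndependent.pair_iff]
    intro s t h
    have hre := congrArg Complex.re h
    have him := congrArg Complex.im h
    simp at hre him
    have h1 : (s + t) * (2 * a) = 0 := by linarith
    have h2 : (s - t) * (2 * b) = 0 := by linarith
    rcases mul_eq_zero.mp h1 with h1 | h1
    · rcases mul_eq_zero.mp h2 with h2 | h2
      · constructor <;> linarith
      · exact absurd h2 (by positivity)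
    · exact absurd h1 (by positivity)

section Diag

variable {a b : ℝ} (ha : 0 < a) (hb : 0 < b)

/-- The rectangular lattice is the disjoint union of the sublattice and its translate by `2a`. -/
lemma rect_eq_diag (z : ℂ) : (rectPair a b ha hb).weierstrassP z =
    (diagPair a b ha hb).weierstrassP z + ((diagPair a b ha hb).weierstrassP (z - 2 * a)
      - (diagPair a b ha hb).weierstrassP (-(2 * a))) := by
  have h := (rectPair a b ha hb).hasSum_weierstrassP_prod z
  have h1 := (diagPair a b ha hb).hasSum_weierstrassP_prod z
  have h2 := ((diagPair a b ha hb).hasSum_weierstrassP_prod (z - 2 * a)).sub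
    ((diagPair a b ha hb).hasSum_weierstrassP_prod (-(2 * a)))
  refine h.unique (HasSum.of_two_injective (i := fun p : ℤ × ℤ => (p.1 + p.2, p.1 - p.2))
    (j := fun p : ℤ × ℤ => (p.1 + p.2 + 1, p.1 - p.2)) ?_ ?_ ?_ ?_
    (h1.congr_fun fun p => ?_) (h2.congr_fun fun p => ?_))
  · rintro ⟨a, b⟩ ⟨c, d⟩ h; simp at h ⊢; omega
  · rintro ⟨a, b⟩ ⟨c, d⟩ h; simp at h ⊢; omega
  · rintro ⟨a, b⟩ ⟨c, d⟩ h; simp at h; omega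
  · rintro ⟨m, n⟩
    rcases Int.even_or_odd' (m + n) with ⟨c, hc | hc⟩
    · left; exact ⟨(c, c - n), by simp; omega⟩
    · right; exact ⟨(c, c - n), by simp; omega⟩
  · have e : (((p.1 + p.2 : ℤ) : ℂ) * (2 * a) + ((p.1 - p.2 : ℤ) : ℂ) * (2 * b * Complex.I))
      = p.1 * (2 * (a + b * Complex.I)) + p.2 * (2 * (a - b * Complex.I)) := by
      push_cast; ring
    simp only [Function.comp_apply, rectPair, diagPair, e]
  · have e : (((p.1 + p.2 + 1 : ℤ) : ℂ) * (2 * a) + ((p.1 - p.2 : ℤ) : ℂ) * (2 * b * Complex.I))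
      = 2 * a + (p.1 * (2 * (a + b * Complex.I)) + p.2 * (2 * (a - b * Complex.I))) := by
      push_cast; ring
    simp only [Function.comp_apply, rectPair, diagPair, e]
    generalize (p.1 * (2 * (a + b * Complex.I)) + p.2 * (2 * (a - b * Complex.I)) : ℂ) = l
    rw [show (-(2 * (a : ℂ)) - l) ^ 2 = (2 * a + l) ^ 2 by ring, ← sub_sub z]
    ring

lemma two_mul_mem_diag : 2 * (a + b * Complex.I) ∈ (diagPair a b ha hb).lattice := by
  rw [PeriodPair.mem_lattice]; exact ⟨1, 0, by simp [diagPair]⟩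

lemma four_mul_mem_diag : 4 * (a : ℂ) ∈ (diagPair a b ha hb).lattice := by
  rw [PeriodPair.mem_lattice]; exact ⟨1, 1, by simp [diagPair]; ring⟩

/-- `1 / (Mu/2 + Nū/2)²` with `u = a + ib`. -/
noncomputable def diagG (a b : ℝ) (M N : ℂ) : ℂ :=
  1 / (M * ((a + b * Complex.I) / 2) + N * ((a - b * Complex.I) / 2)) ^ 2

lemma hasSum_diag : HasSum (fun p : ℤ × ℤ => quadTerm (diagG a b) p.1 p.2)
    ((rectE1 ha hb : ℂ) - rectE3 ha hb) := by
  set P := (diagPair a b ha hb).weierstrassP with hP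
  have hs : ∀ z, HasSum (fun p : ℤ × ℤ => 1 / (z + (p.1 * (2 * (a + b * Complex.I)) +
      p.2 * (2 * (a - b * Complex.I)))) ^ 2 - 1 / (p.1 * (2 * (a + b * Complex.I)) +
      p.2 * (2 * (a - b * Complex.I))) ^ 2) (P z) := by
    intro z
    have h := (diagPair a b ha hb).hasSum_weierstrassP_prod (-z)
    rw [PeriodPair.weierstrassP_neg] at h
    refine h.congr_fun fun p => ?_
    simp only [diagPair]
    rw [← neg_sq (-z - _)]
    ring_nf
  have h := (((hs a).sub (hs (2 * a + b * Complex.I))).sub (hs (2 * a - b * Complex.I))).add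
    (hs (3 * a))
  have hv : P a - P (2 * a + b * Complex.I) - P (2 * a - b * Complex.I) + P (3 * a) =
      (rectE1 ha hb : ℂ) - rectE3 ha hb := by
    rw [← rectE1_eq, ← rectE3_eq, rect_eq_diag, rect_eq_diag]
    have p1 : P (3 * a) = P (a - 2 * a) := by
      have := (diagPair a b ha hb).weierstrassP_add_mem (a - 2 * a) (four_mul_mem_diag ha hb)
      rw [hP, ← this]; congr 1; ring
    have p2 : P (2 * a + b * Complex.I) = P (b * Complex.I) := by
      have := (diagPair a b ha hb).weierstrassP_add_mem (-(b * Complex.I)) (two_mul_mem_diag ha hb)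
      rw [hP, ← (diagPair a b ha hb).weierstrassP_neg (b * Complex.I), ← this]; congr 1; ring
    have p3 : P (2 * a - b * Complex.I) = P (b * Complex.I - 2 * a) := by
      rw [hP, ← (diagPair a b ha hb).weierstrassP_neg]; congr 1; ring
    rw [p1, p2, p3]; ring
  rw [← hv]
  refine h.congr_fun fun p => ?_
  have key : ∀ c d : ℂ, diagG a b (4 * p.1 + c) (4 * p.2 + d) =
      1 / (c * ((a + b * Complex.I) / 2) + d * ((a - b * Complex.I) / 2) +
        (p.1 * (2 * (a + b * Complex.I)) + p.2 * (2 * (a - b * Complex.I)))) ^ 2 := by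
    intro c d; unfold diagG; congr 2; ring
  unfold quadTerm
  rw [key, key, key, key]
  generalize (p.1 * (2 * (a + b * Complex.I)) + p.2 * (2 * (a - b * Complex.I)) : ℂ) = l
  ring_nf

/-- Each of the two integrals accounts for two opposite quadrants of the sum in `hasSum_diag`. -/
lemma integral_add_eq :
    ((∫ t in Set.Ioi (0 : ℝ), t / (Real.cos (a * t) + Real.cosh (b * t))) +
      ∫ t in Set.Ioi (0 : ℝ), t / (Real.cosh (a * t) + Real.cos (b * t))) =
      rectE1 ha hb - rectE3 ha hb := by
  set J₁ := ∫ t in Set.Ioi (0 : ℝ), t / (Real.cos (a * t) + Real.cosh (b * t)) with hJ₁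
  set J₂ := ∫ t in Set.Ioi (0 : ℝ), t / (Real.cosh (a * t) + Real.cos (b * t)) with hJ₂
  have hcosh : ∀ x y : ℂ, 2 * (Complex.cosh x * Complex.cosh y) =
      Complex.cosh (x + y) + Complex.cosh (x - y) := by
    intro x y; rw [Complex.cosh_add, Complex.cosh_sub]; ring
  have h2 := hasSum_laplace (α := (a + b * Complex.I) / 2) (β := (a - b * Complex.I) / 2)
    (by simp; positivity) (by simp; positivity)
  have h1 := hasSum_laplace (α := (b - a * Complex.I) / 2) (β := (b + a * Complex.I) / 2)
    (by simp; positivity) (by simp; positivity)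
  have i2 : ∫ t in Set.Ioi (0 : ℝ), (t : ℂ) / (4 * (Complex.cosh ((a + b * Complex.I) / 2 * t) *
      Complex.cosh ((a - b * Complex.I) / 2 * t))) = (J₂ : ℂ) / 2 := by
    rw [hJ₂, ← integral_complex_ofReal, ← integral_div]
    congr 1; ext t
    have := hcosh ((a + b * Complex.I) / 2 * t) ((a - b * Complex.I) / 2 * t)
    rw [show (a + b * Complex.I) / 2 * t + (a - b * Complex.I) / 2 * t = ((a * t : ℝ) : ℂ) by
        push_cast; ring,
      show (a + b * Complex.I) / 2 * t - (a - b * Complex.I) / 2 * t = ((b * t : ℝ) : ℂ) * Complex.I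
        by push_cast; ring, Complex.cosh_mul_I] at this
    rw [show (4 : ℂ) = 2 * 2 by norm_num, mul_assoc, this]
    push_cast
    rw [div_div, mul_comm]
  have i1 : ∫ t in Set.Ioi (0 : ℝ), (t : ℂ) / (4 * (Complex.cosh ((b - a * Complex.I) / 2 * t) *
      Complex.cosh ((b + a * Complex.I) / 2 * t))) = (J₁ : ℂ) / 2 := by
    rw [hJ₁, ← integral_complex_ofReal, ← integral_div]
    congr 1; ext t
    have := hcosh ((b - a * Complex.I) / 2 * t) ((b + a * Complex.I) / 2 * t)
    rw [show (b - a * Complex.I) / 2 * t + (b + a * Complex.I) / 2 * t = ((b * t : ℝ) : ℂ) by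
        push_cast; ring,
      show (b - a * Complex.I) / 2 * t - (b + a * Complex.I) / 2 * t =
        -(((a * t : ℝ) : ℂ) * Complex.I) by push_cast; ring, Complex.cosh_neg,
      Complex.cosh_mul_I] at this
    rw [show (4 : ℂ) = 2 * 2 by norm_num, mul_assoc, this]
    push_cast
    rw [div_div, mul_comm, add_comm (Complex.cosh _)]
  rw [i2] at h2
  rw [i1] at h1
  -- with `α = (b - ai)/2 = -iu/2` and `β = (b + ai)/2 = iū/2` one has `-Mu/2 + Nū/2 = -i(Mα + Nβ)`
  have g1 : ∀ M N : ℂ, diagG a b (-M) N =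
      -(1 / (M * ((b - a * Complex.I) / 2) + N * ((b + a * Complex.I) / 2)) ^ 2) := by
    intro M N
    unfold diagG
    rw [← div_neg]; congr 1
    linear_combination ((N - M) ^ 2 * a ^ 2 / 4 + (M + N) ^ 2 * b ^ 2 / 4 : ℂ) * Complex.I_sq
  have g2 : ∀ M N : ℂ, diagG a b M (-N) = diagG a b (-M) N := by
    intro M N; unfold diagG; congr 1; ring
  have g3 : ∀ M N : ℂ, diagG a b (-M) (-N) = diagG a b M N := by
    intro M N; unfold diagG; congr 1; ring
  have e1 : ∀ x : ℕ, 4 * (((-x - 1 : ℤ)) : ℂ) + 1 = -(4 * (x : ℂ) + 3) := by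
    intro x; push_cast; ring
  have e3 : ∀ x : ℕ, 4 * (((-x - 1 : ℤ)) : ℂ) + 3 = -(4 * (x : ℂ) + 1) := by
    intro x; push_cast; ring
  have hsum := hasSum_quadrants (f := fun x y => quadTerm (diagG a b) x y)
    (s₁ := (J₂ : ℂ) / 2) (s₂ := (J₁ : ℂ) / 2) (s₃ := (J₁ : ℂ) / 2) (s₄ := (J₂ : ℂ) / 2)
    (h2.congr_fun fun p => by simp only [Int.cast_natCast]; rfl)
    (h1.congr_fun fun p => by
      simp only [quadTerm, e1, e3, Int.cast_natCast, g2, g1]; ring)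
    (h1.congr_fun fun p => by
      simp only [quadTerm, e1, e3, Int.cast_natCast, g1]; ring)
    (h2.congr_fun fun p => by
      simp only [quadTerm, e1, e3, g3]; unfold diagG; ring)
  have := hsum.unique (hasSum_diag ha hb)
  have h : (((J₁ + J₂ : ℝ)) : ℂ) = ((rectE1 ha hb - rectE3 ha hb : ℝ) : ℂ) := by
    push_cast; rw [← this]; ring
  exact_mod_cast h

end Diag

/-- The substitution `x = t²`. -/
lemma integral_sqrt_subst (g : ℝ → ℝ) :
    ∫ x in Set.Ioi (0 : ℝ), 1 / g (√x) = 2 * ∫ t in Set.Ioi (0 : ℝ), t / g t := by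
  rw [← integral_comp_rpow_Ioi_of_pos (p := 2) two_pos, ← integral_const_mul]
  refine setIntegral_congr_fun measurableSet_Ioi fun t ht => ?_
  have ht : 0 < t := ht
  simp only [Real.rpow_ofNat, Real.sqrt_sq ht.le, smul_eq_mul]
  norm_num
  ring

theorem ismail_valent_integral (k : ℝ) (hk : k ∈ Set.Ioo (0 : ℝ) 1) :
    ((∫ x in Set.Ioi (0 : ℝ), 1 /
        (Real.cos (ellipticK k * Real.sqrt x) +
          Real.cosh (ellipticK (Real.sqrt (1 - k ^ 2)) * Real.sqrt x)))
      + (∫ x in Set.Ioi (0 : ℝ), 1 /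
        (Real.cosh (ellipticK k * Real.sqrt x) +
          Real.cos (ellipticK (Real.sqrt (1 - k ^ 2)) * Real.sqrt x))) = 2) ∧
    Iplus k 0 = 1 := by
  obtain ⟨hk0, hk1⟩ := hk
  have ha : 0 < ellipticK k := ellipticK_pos (by nlinarith)
  have hb : 0 < ellipticK (√(1 - k ^ 2)) := by
    apply ellipticK_pos
    rw [Real.sq_sqrt (by nlinarith)]; nlinarith
  have h1 := integral_sqrt_subst fun t =>
    Real.cos (ellipticK k * t) + Real.cosh (ellipticK (√(1 - k ^ 2)) * t)
  have h2 := integral_sqrt_subst fun t =>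
    Real.cosh (ellipticK k * t) + Real.cos (ellipticK (√(1 - k ^ 2)) * t)
  have h3 := integral_add_eq ha hb
  rw [rectE_sub_eq_one ha hb ⟨hk0, hk1⟩ rfl rfl] at h3
  have hmain : (∫ x in Set.Ioi (0 : ℝ), 1 /
        (Real.cos (ellipticK k * Real.sqrt x) +
          Real.cosh (ellipticK (Real.sqrt (1 - k ^ 2)) * Real.sqrt x)))
      + (∫ x in Set.Ioi (0 : ℝ), 1 /
        (Real.cosh (ellipticK k * Real.sqrt x) +
          Real.cos (ellipticK (Real.sqrt (1 - k ^ 2)) * Real.sqrt x))) = 2 := by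
    rw [h1, h2, ← mul_add, h3, mul_one]
  refine ⟨hmain, ?_⟩
  simp only [Iplus, pow_zero]
  linarith
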